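/- Under the hypotheses of the location-family proposition (g differentiable, strictly convex with minimum at 0, g' surjective onto ℝ), the effective loss L_λ(r) := min_γ { g(r - γ) + λ|γ| } is convex, agrees with g(r) for r ∈ [(g')⁻¹(-λ), (g')⁻¹(λ)], and is affine (linear with slope λ or -λ) outside this interval, with a continuous derivative everywhere. -/

import Mathlib

/-!
Let `g'(b) = -λ` and `g'(a) = λ`. A shift `γ = r - c` is optimal as soon as the slope `d = g'(c)`
satisfies `|d| ≤ λ` and `d γ = λ |γ|`: then the tangent of `g` at `c` stays below
`g(y - γ') + λ |γ'|` for all `y` and `γ'`, with equality at `y = r`, `γ' = γ`. The projection `c`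
of `r` onto `[b, a]` has this property, so `L_λ(r) = g(c) + λ |r - c|`.

The function `L_λ` lies above this tangent and below the translate of `g` obtained by keeping `γ`
fixed, and both have slope `g'(c)` at `r`. Hence `L_λ` is differentiable with derivative `g' ∘ c`,
which is monotone, so `L_λ` is convex. The derivative of a differentiable convex function is
continuous, because a monotone function with the Darboux property has no jumps.
-/

open Set Topology

theorem continuous_of_monotone_of_ordConnected_range {α β : Type*}
    [LinearOrder α] [TopologicalSpace α] [OrderTopology α]
    [LinearOrder β] [TopologicalSpace β] [OrderTopology β] [DenselyOrdered β]
    {f : α → β} [(range f).OrdConnected] (hf : Monotone f) : Continuous f :=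
  have hmono : Monotone (rangeFactorization f) := fun _ _ hxy => hf hxy
  continuous_subtype_val.comp (hmono.continuous_of_surjective rangeFactorization_surjective)

theorem monotone_deriv_of_convexOn {g : ℝ → ℝ} (hconv : ConvexOn ℝ univ g)
    (hg : Differentiable ℝ g) : Monotone (deriv g) :=
  monotoneOn_univ.1 (hconv.monotoneOn_deriv fun x _ => hg x)

theorem continuous_deriv_of_convexOn {g : ℝ → ℝ} (hconv : ConvexOn ℝ univ g)
    (hg : Differentiable ℝ g) : Continuous (deriv g) := by
  have hrange : (range (deriv g)).OrdConnected := by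
    rw [← image_univ]
    exact ordConnected_univ.image_deriv fun x _ => hg x
  exact continuous_of_monotone_of_ordConnected_range (monotone_deriv_of_convexOn hconv hg)

section NormedSpace

variable {E : Type*} [NormedAddCommGroup E] [NormedSpace ℝ E]

theorem add_fderiv_sub_le_of_convexOn {s : Set E} {g : E → ℝ} {d : E →L[ℝ] ℝ} {x y : E}
    (hconv : ConvexOn ℝ s g) (hx : x ∈ s) (hy : y ∈ s) (hd : HasFDerivAt g d x) :
    g x + d (y - x) ≤ g y := by
  let line : ℝ →ᵃ[ℝ] E := AffineMap.lineMap x y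
  have hline : HasDerivAt (g ∘ line) (d (y - x)) 0 :=
    HasFDerivAt.comp_hasDerivAt 0 (by simpa [line] using hd) AffineMap.hasDerivAt_lineMap
  have hslope := (hconv.comp_affineMap line).le_slope_of_hasDerivAt (x := 0) (y := 1)
    (by simpa [line] using hx) (by simpa [line] using hy) one_pos hline
  simp only [slope_def_field, Function.comp_apply, line, AffineMap.lineMap_apply_zero,
    AffineMap.lineMap_apply_one, sub_zero, div_one] at hslope
  linarith

theorem hasFDerivAt_of_eventually_le_of_le {l f u : E → ℝ} {d : E →L[ℝ] ℝ} {x : E}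
    (hl : HasFDerivAt l d x) (hu : HasFDerivAt u d x) (hlf : ∀ᶠ y in 𝓝 x, l y ≤ f y)
    (hfu : ∀ᶠ y in 𝓝 x, f y ≤ u y) (hlx : l x = f x) (hux : u x = f x) :
    HasFDerivAt f d x := by
  rw [hasFDerivAt_iff_isLittleO, Asymptotics.isLittleO_iff] at hl hu ⊢
  intro ε hε
  filter_upwards [hl hε, hu hε, hlf, hfu] with y hly huy hlfy hfuy
  rw [Real.norm_eq_abs, abs_le] at hly huy ⊢
  constructor <;> linarith

/-- The effective loss `L_λ(r) = inf_γ g(r - γ) + λ‖γ‖`: the loss `g` after the case-specific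
shift `γ`, penalized by its norm, has been profiled out. As `sInf` on `ℝ` takes a junk value on
sets that are unbounded below, it is meaningful when the infimum is finite. -/
noncomputable def effectiveLoss (g : E → ℝ) (lam : ℝ) (r : E) : ℝ :=
  sInf {v : ℝ | ∃ γ : E, v = g (r - γ) + lam * ‖γ‖}

variable {g : E → ℝ} {lam : ℝ} {d : E →L[ℝ] ℝ} {c x : E}

theorem add_fderiv_sub_le_penalized (hconv : ConvexOn ℝ univ g) (hgc : HasFDerivAt g d c)
    (hd : ‖d‖ ≤ lam) (y γ : E) : g c + d (y - c) ≤ g (y - γ) + lam * ‖γ‖ :=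
  calc
    g c + d (y - c) = g c + d (y - γ - c) + d γ := by simp only [map_sub]; ring
    _ ≤ g (y - γ) + lam * ‖γ‖ :=
      add_le_add (add_fderiv_sub_le_of_convexOn hconv (mem_univ c) (mem_univ _) hgc)
        ((le_abs_self _).trans (d.le_of_opNorm_le hd γ))

theorem effectiveLoss_le_penalized (hconv : ConvexOn ℝ univ g) (hgc : HasFDerivAt g d c)
    (hd : ‖d‖ ≤ lam) (y γ : E) : effectiveLoss g lam y ≤ g (y - γ) + lam * ‖γ‖ := by
  refine csInf_le ⟨g c + d (y - c), ?_⟩ ⟨γ, rfl⟩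
  rintro _ ⟨γ', rfl⟩
  exact add_fderiv_sub_le_penalized hconv hgc hd y γ'

theorem add_fderiv_sub_le_effectiveLoss (hconv : ConvexOn ℝ univ g) (hgc : HasFDerivAt g d c)
    (hd : ‖d‖ ≤ lam) (y : E) : g c + d (y - c) ≤ effectiveLoss g lam y := by
  refine le_csInf ⟨_, 0, rfl⟩ ?_
  rintro _ ⟨γ, rfl⟩
  exact add_fderiv_sub_le_penalized hconv hgc hd y γ

theorem effectiveLoss_eq_of_apply_sub_eq (hconv : ConvexOn ℝ univ g) (hgc : HasFDerivAt g d c)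
    (hd : ‖d‖ ≤ lam) (hdx : d (x - c) = lam * ‖x - c‖) :
    effectiveLoss g lam x = g c + lam * ‖x - c‖ := by
  apply le_antisymm
  · simpa only [sub_sub_cancel] using effectiveLoss_le_penalized hconv hgc hd x (x - c)
  · simpa only [hdx] using add_fderiv_sub_le_effectiveLoss hconv hgc hd x

theorem hasFDerivAt_effectiveLoss (hconv : ConvexOn ℝ univ g) (hgc : HasFDerivAt g d c)
    (hd : ‖d‖ ≤ lam) (hdx : d (x - c) = lam * ‖x - c‖) :
    HasFDerivAt (effectiveLoss g lam) d x := by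
  have heq := effectiveLoss_eq_of_apply_sub_eq hconv hgc hd hdx
  have htangent : HasFDerivAt (fun y => g c + d (y - c)) d x :=
    (d.hasFDerivAt.comp x (hasFDerivAt_sub_const c)).const_add (g c)
  have htranslate : HasFDerivAt (fun y => g (y - (x - c)) + lam * ‖x - c‖) d x :=
    ((hasFDerivAt_comp_sub (x - c)).2 (by simpa using hgc)).add_const _
  exact hasFDerivAt_of_eventually_le_of_le htangent htranslate
    (.of_forall (add_fderiv_sub_le_effectiveLoss hconv hgc hd))
    (.of_forall fun y => effectiveLoss_le_penalized hconv hgc hd y (x - c))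
    (by rw [heq, hdx]) (by rw [heq, sub_sub_cancel])

end NormedSpace

theorem abs_apply_projIcc_le {α : Type*} [LinearOrder α] {f : α → ℝ} {a b : α} {lam : ℝ}
    (hba : b ≤ a) (hf : MonotoneOn f (Icc b a)) (ha : f a ≤ lam) (hb : -lam ≤ f b) (x : α) :
    |f (projIcc b a hba x)| ≤ lam := by
  have hmem := (projIcc b a hba x).2
  exact abs_le.2 ⟨hb.trans (hf (left_mem_Icc.2 hba) hmem hmem.1),
    (hf hmem (right_mem_Icc.2 hba) hmem.2).trans ha⟩

theorem sub_projIcc_mul_apply_projIcc {f : ℝ → ℝ} {a b lam : ℝ} (hba : b ≤ a)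
    (ha : f a = lam) (hb : f b = -lam) (x : ℝ) :
    (x - projIcc b a hba x) * f (projIcc b a hba x) = lam * |x - projIcc b a hba x| := by
  rcases le_total x b with hxb | hbx
  · rw [projIcc_of_le_left hba hxb, hb, abs_of_nonpos (sub_nonpos.2 hxb)]
    ring
  rcases le_total a x with hax | hxa
  · rw [projIcc_of_right_le hba hax, ha, abs_of_nonneg (sub_nonneg.2 hax), mul_comm]
  · simp [projIcc_of_mem hba ⟨hbx, hxa⟩]

section Real

variable {g : ℝ → ℝ} {lam a b : ℝ}

theorem norm_toSpanSingleton_deriv_projIcc_le (hg : Differentiable ℝ g)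
    (hconv : ConvexOn ℝ univ g) (hba : b ≤ a) (ha : deriv g a = lam) (hb : deriv g b = -lam)
    (x : ℝ) : ‖ContinuousLinearMap.toSpanSingleton ℝ (deriv g (projIcc b a hba x))‖ ≤ lam := by
  rw [ContinuousLinearMap.norm_toSpanSingleton]
  exact abs_apply_projIcc_le hba ((monotone_deriv_of_convexOn hconv hg).monotoneOn _)
    ha.le hb.ge x

theorem effectiveLoss_eq_projIcc (hg : Differentiable ℝ g) (hconv : ConvexOn ℝ univ g)
    (hba : b ≤ a) (ha : deriv g a = lam) (hb : deriv g b = -lam) (x : ℝ) :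
    effectiveLoss g lam x = g (projIcc b a hba x) + lam * |x - projIcc b a hba x| :=
  effectiveLoss_eq_of_apply_sub_eq hconv (hg _).hasDerivAt.hasFDerivAt
    (norm_toSpanSingleton_deriv_projIcc_le hg hconv hba ha hb x)
    (sub_projIcc_mul_apply_projIcc hba ha hb x)

theorem hasDerivAt_effectiveLoss (hg : Differentiable ℝ g) (hconv : ConvexOn ℝ univ g)
    (hba : b ≤ a) (ha : deriv g a = lam) (hb : deriv g b = -lam) (x : ℝ) :
    HasDerivAt (effectiveLoss g lam) (deriv g (projIcc b a hba x)) x :=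
  hasFDerivAt_effectiveLoss hconv (hg _).hasDerivAt.hasFDerivAt
    (norm_toSpanSingleton_deriv_projIcc_le hg hconv hba ha hb x)
    (sub_projIcc_mul_apply_projIcc hba ha hb x)

theorem convexOn_effectiveLoss (hg : Differentiable ℝ g) (hconv : ConvexOn ℝ univ g)
    (hba : b ≤ a) (ha : deriv g a = lam) (hb : deriv g b = -lam) :
    ConvexOn ℝ univ (effectiveLoss g lam) := by
  have hderiv := hasDerivAt_effectiveLoss hg hconv hba ha hb
  refine Monotone.convexOn_univ_of_deriv (fun x => (hderiv x).differentiableAt) ?_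
  rw [funext fun x => (hderiv x).deriv]
  exact (monotone_deriv_of_convexOn hconv hg).comp fun _ _ hxy => monotone_projIcc hba hxy

end Real

theorem location_family_effective_loss_general (g : ℝ → ℝ) (lam : ℝ) (hlam : 0 < lam)
    (hg : Differentiable ℝ g) (hconv : ConvexOn ℝ univ g)
    (a b : ℝ) (ha : deriv g a = lam) (hb : deriv g b = -lam) :
    ConvexOn ℝ univ (effectiveLoss g lam) ∧
    (∀ r ∈ Icc b a, effectiveLoss g lam r = g r) ∧
    (∀ r : ℝ, a < r → effectiveLoss g lam r = g a + lam * (r - a)) ∧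
    (∀ r : ℝ, r < b → effectiveLoss g lam r = g b - lam * (r - b)) ∧
    Differentiable ℝ (effectiveLoss g lam) ∧ Continuous (deriv (effectiveLoss g lam)) := by
  have hba : b ≤ a :=
    ((monotone_deriv_of_convexOn hconv hg).reflect_lt (by linarith : deriv g b < deriv g a)).le
  have heq := effectiveLoss_eq_projIcc hg hconv hba ha hb
  have hconvL := convexOn_effectiveLoss hg hconv hba ha hb
  have hdiffL : Differentiable ℝ (effectiveLoss g lam) :=
    fun x => (hasDerivAt_effectiveLoss hg hconv hba ha hb x).differentiableAt
  refine ⟨hconvL, fun r hr => ?_, fun r hr => ?_, fun r hr => ?_, hdiffL,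
    continuous_deriv_of_convexOn hconvL hdiffL⟩
  · simp [heq, projIcc_of_mem hba hr]
  · rw [heq, projIcc_of_right_le hba hr.le, abs_of_pos (sub_pos.2 hr)]
  · rw [heq, projIcc_of_le_left hba hr.le, abs_of_neg (sub_neg.2 hr), mul_neg, ← sub_eq_add_neg]

/-- The effective loss `L_λ(r) = inf_γ g(r - γ) + λ|γ|` is convex, agrees with `g` on
`[(g')⁻¹(-λ), (g')⁻¹(λ)]`, is affine with slope `λ` (resp. `-λ`) beyond that interval,
and has a continuous derivative everywhere. -/
theorem location_family_effective_loss (g : ℝ → ℝ) (lam : ℝ) (hlam : 0 < lam)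
    (hg : Differentiable ℝ g)
    (hconv : StrictConvexOn ℝ Set.univ g)
    (hmin : ∀ x : ℝ, g 0 ≤ g x)
    (hsurj : Function.Surjective (deriv g))
    (a b : ℝ) (ha : deriv g a = lam) (hb : deriv g b = -lam) :
    let L : ℝ → ℝ := fun r => sInf {v : ℝ | ∃ γ : ℝ, v = g (r - γ) + lam * |γ|}
    ConvexOn ℝ Set.univ L ∧
    (∀ r ∈ Set.Icc b a, L r = g r) ∧
    (∀ r : ℝ, a < r → L r = g a + lam * (r - a)) ∧
    (∀ r : ℝ, r < b → L r = g b - lam * (r - b)) ∧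
    Differentiable ℝ L ∧ Continuous (deriv L) :=
  location_family_effective_loss_general g lam hlam hg hconv.convexOn a b ha hb
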